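/- arXiv:2103.10314 — 2 statements merged into one kernel-verified Lean document; each statement's English description precedes it below -/
import Mathlib

section
/- Let h(ξ,t) = (ξ/√t)·e^{−|ξ|²t} for ξ ∈ ℝᴺ, t > 0. For every multi-index α with |α| = k there exists C_k > 0 such that |ξ|^k ∫₀^∞ |D^α_ξ h(ξ,t)| dt ≤ C_k for all ξ ≠ 0. -/
open MeasureTheory Set
open scoped ENNReal

/-!
Write `h(ξ,t) = t⁻¹ g(√t ξ)` with `g(η) = e^{-|η|²} η`. Substituting `s = √t |ξ|`, the weight
`|ξ|^k` absorbs all the scaling, leaving `2 ∫₀^∞ s^{k-1} ‖D^k g(s ξ/|ξ|)‖ ds`. The only property of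
`g` that matters is that it is a Schwartz function vanishing at the origin: the vanishing makes the
integral converge at `0` when `k = 0`, and decay makes `s^k ‖D^k g‖` at most a constant multiple of
`s / (1 + s²)`.
-/

open scoped SchwartzMap

section Substitution

theorem image_mul_sqrt_Ioi_zero {a : ℝ} (ha : 0 < a) :
    (fun t ↦ a * √t) '' Ioi 0 = Ioi 0 := by
  refine Subset.antisymm ?_ fun s (hs : 0 < s) ↦ ⟨(s / a) ^ 2, pow_pos (div_pos hs ha) 2, ?_⟩
  · rintro _ ⟨t, ht, rfl⟩
    exact mul_pos ha (Real.sqrt_pos.2 ht)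
  · simp only [Real.sqrt_sq (div_pos hs ha).le, mul_div_cancel₀ s ha.ne']

theorem lintegral_Ioi_comp_mul_sqrt {a : ℝ} (ha : 0 < a) (f : ℝ → ℝ≥0∞) :
    ∫⁻ t in Ioi 0, ENNReal.ofReal (a / (2 * √t)) * f (a * √t) = ∫⁻ s in Ioi 0, f s := by
  have hderiv : ∀ t ∈ Ioi (0 : ℝ),
      HasDerivWithinAt (fun t ↦ a * √t) (a / (2 * √t)) (Ioi 0) t := fun t ht ↦
    (((Real.hasDerivAt_sqrt (ne_of_gt ht)).const_mul a).congr_deriv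
      (mul_one_div _ _)).hasDerivWithinAt
  have hmono : MonotoneOn (fun t ↦ a * √t) (Ioi 0) := fun s _ t _ hst ↦ by dsimp only; gcongr
  rw [← lintegral_image_eq_lintegral_deriv_mul_of_monotoneOn measurableSet_Ioi hderiv hmono,
    image_mul_sqrt_Ioi_zero ha]

theorem lintegral_Ioi_inv_one_add_sq :
    ∫⁻ s in Ioi (0 : ℝ), ENNReal.ofReal (1 + s ^ 2)⁻¹ = ENNReal.ofReal (Real.pi / 2) := by
  rw [← ofReal_integral_eq_lintegral_ofReal integrable_inv_one_add_sq.integrableOn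
    (.of_forall fun s ↦ by positivity), integral_Ioi_inv_one_add_sq, Real.arctan_zero, sub_zero]

end Substitution

section Dilation

theorem norm_iteratedFDeriv_const_smul_comp_const_smul {𝕜 E F : Type*} [NontriviallyNormedField 𝕜]
    [NormedAddCommGroup E] [NormedSpace 𝕜 E] [NormedAddCommGroup F] [NormedSpace 𝕜 F]
    {k : ℕ} {f : E → F} (hf : ContDiff 𝕜 k f) (a b : 𝕜) (x : E) :
    ‖iteratedFDeriv 𝕜 k (fun z ↦ a • f (b • z)) x‖ =
      ‖a‖ * ‖b‖ ^ k * ‖iteratedFDeriv 𝕜 k f (b • x)‖ := by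
  have hcomp : ContDiff 𝕜 k fun z ↦ f (b • z) := hf.comp (contDiff_const_smul b)
  rw [iteratedFDeriv_const_smul_apply' hcomp.contDiffAt, iteratedFDeriv_comp_const_smul b hf,
    norm_smul, norm_smul, norm_pow, mul_assoc]

variable {E F : Type*} [NormedAddCommGroup E] [NormedSpace ℝ E]
  [NormedAddCommGroup F] [NormedSpace ℝ F]

theorem exists_norm_le_mul_norm_of_map_zero (g : 𝓢(E, F)) (hg : g 0 = 0) :
    ∃ C, 0 < C ∧ ∀ x, ‖g x‖ ≤ C * ‖x‖ := by
  obtain ⟨C, hC, hbound⟩ := g.decay 0 1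
  refine ⟨C, hC, fun x ↦ ?_⟩
  have hfderiv : ∀ y ∈ univ, ‖fderiv ℝ g y‖ ≤ C := fun y _ ↦ by
    simpa [norm_iteratedFDeriv_one] using hbound y
  simpa [hg] using convex_univ.norm_image_sub_le_of_norm_fderiv_le
    (fun y _ ↦ g.differentiableAt) hfderiv (mem_univ 0) (mem_univ x)

theorem exists_norm_pow_mul_norm_iteratedFDeriv_le_mul_norm (g : 𝓢(E, F)) (hg : g 0 = 0) (k : ℕ) :
    ∃ C, 0 < C ∧ ∀ x, ‖x‖ ^ k * ‖iteratedFDeriv ℝ k g x‖ ≤ C * ‖x‖ := by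
  cases k with
  | zero => simpa using exists_norm_le_mul_norm_of_map_zero g hg
  | succ k =>
    obtain ⟨C, hC, hbound⟩ := g.decay k (k + 1)
    refine ⟨C, hC, fun x ↦ ?_⟩
    calc ‖x‖ ^ (k + 1) * ‖iteratedFDeriv ℝ (k + 1) g x‖
        = ‖x‖ ^ k * ‖iteratedFDeriv ℝ (k + 1) g x‖ * ‖x‖ := by ring
      _ ≤ C * ‖x‖ := by gcongr; exact hbound x

theorem exists_norm_pow_mul_norm_iteratedFDeriv_le (g : 𝓢(E, F)) (hg : g 0 = 0) (k : ℕ) :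
    ∃ C, 0 < C ∧ ∀ x, ‖x‖ ^ k * ‖iteratedFDeriv ℝ k g x‖ ≤ C * (‖x‖ * (1 + ‖x‖ ^ 2)⁻¹) := by
  obtain ⟨C₀, hC₀, hnear⟩ := exists_norm_pow_mul_norm_iteratedFDeriv_le_mul_norm g hg k
  obtain ⟨C₁, hC₁, hfar⟩ := g.decay (k + 1) k
  refine ⟨C₀ + C₁, by positivity, fun x ↦ ?_⟩
  rw [← mul_assoc, ← div_eq_mul_inv, le_div_iff₀ (by positivity)]
  calc ‖x‖ ^ k * ‖iteratedFDeriv ℝ k g x‖ * (1 + ‖x‖ ^ 2)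
      = ‖x‖ ^ k * ‖iteratedFDeriv ℝ k g x‖
        + ‖x‖ ^ (k + 1) * ‖iteratedFDeriv ℝ k g x‖ * ‖x‖ := by ring
    _ ≤ C₀ * ‖x‖ + C₁ * ‖x‖ := by
        gcongr ?_ + ?_ * ‖x‖
        · exact hnear x
        · exact hfar x
    _ = (C₀ + C₁) * ‖x‖ := by ring

theorem exists_norm_pow_mul_norm_iteratedFDeriv_dilation_le (g : 𝓢(E, F)) (hg : g 0 = 0) (k : ℕ) :
    ∃ C, 0 < C ∧ ∀ ξ : E, ∀ t : ℝ, 0 < t →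
      ‖ξ‖ ^ k * ‖iteratedFDeriv ℝ k (fun ζ ↦ t⁻¹ • g (√t • ζ)) ξ‖ ≤
        C * (‖ξ‖ / (2 * √t) * (1 + (‖ξ‖ * √t) ^ 2)⁻¹) := by
  obtain ⟨C, hC, hbound⟩ := exists_norm_pow_mul_norm_iteratedFDeriv_le g hg k
  refine ⟨2 * C, by positivity, fun ξ t ht ↦ ?_⟩
  have hnorm : ‖√t • ξ‖ = ‖ξ‖ * √t := by
    rw [norm_smul, Real.norm_of_nonneg (Real.sqrt_nonneg t), mul_comm]
  rw [norm_iteratedFDeriv_const_smul_comp_const_smul (g.smooth k), norm_inv,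
    Real.norm_of_nonneg ht.le, Real.norm_of_nonneg (Real.sqrt_nonneg t)]
  calc ‖ξ‖ ^ k * (t⁻¹ * √t ^ k * ‖iteratedFDeriv ℝ k g (√t • ξ)‖)
      = t⁻¹ * (‖√t • ξ‖ ^ k * ‖iteratedFDeriv ℝ k g (√t • ξ)‖) := by
        rw [hnorm, mul_pow]; ring
    _ ≤ t⁻¹ * (C * (‖√t • ξ‖ * (1 + ‖√t • ξ‖ ^ 2)⁻¹)) := by gcongr t⁻¹ * ?_; exact hbound _
    _ = √t / t * (C * (‖ξ‖ * (1 + (‖ξ‖ * √t) ^ 2)⁻¹)) := by rw [hnorm]; ring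
    _ = 2 * C * (‖ξ‖ / (2 * √t) * (1 + (‖ξ‖ * √t) ^ 2)⁻¹) := by rw [Real.sqrt_div_self]; ring

theorem exists_lintegral_norm_iteratedFDeriv_dilation_le (g : 𝓢(E, F)) (hg : g 0 = 0) (k : ℕ) :
    ∃ C : ℝ, 0 < C ∧ ∀ ξ : E, ξ ≠ 0 →
      ENNReal.ofReal (‖ξ‖ ^ k) *
        ∫⁻ t in Ioi (0 : ℝ), ‖iteratedFDeriv ℝ k (fun ζ ↦ t⁻¹ • g (√t • ζ)) ξ‖ₑ
        ≤ ENNReal.ofReal C := by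
  obtain ⟨C, hC, hbound⟩ := exists_norm_pow_mul_norm_iteratedFDeriv_dilation_le g hg k
  refine ⟨C * (Real.pi / 2), by positivity, fun ξ hξ ↦ ?_⟩
  rw [ENNReal.ofReal_mul hC.le, ← lintegral_Ioi_inv_one_add_sq,
    ← lintegral_Ioi_comp_mul_sqrt (norm_pos_iff.2 hξ) fun s ↦ ENNReal.ofReal (1 + s ^ 2)⁻¹,
    ← lintegral_const_mul' _ _ ENNReal.ofReal_ne_top,
    ← lintegral_const_mul' _ _ ENNReal.ofReal_ne_top]
  refine setLIntegral_mono' measurableSet_Ioi fun t ht ↦ ?_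
  rw [← ofReal_norm, ← ENNReal.ofReal_mul (by positivity), ← ENNReal.ofReal_mul (by positivity),
    ← ENNReal.ofReal_mul hC.le]
  exact ENNReal.ofReal_le_ofReal (hbound ξ t ht)

end Dilation

section Gaussian

theorem one_add_pow_mul_exp_neg_sq_le (m : ℕ) {r : ℝ} (hr : -1 ≤ r) :
    (1 + r) ^ m * Real.exp (-r ^ 2) ≤ m.factorial * Real.exp 2 := by
  have hpow : (1 + r) ^ m ≤ m.factorial * Real.exp (1 + r) :=
    (div_le_iff₀' (by positivity)).1 (Real.pow_div_factorial_le_exp (1 + r) (by linarith) m)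
  calc (1 + r) ^ m * Real.exp (-r ^ 2)
      ≤ m.factorial * Real.exp (1 + r) * Real.exp (-r ^ 2) := by gcongr
    _ = m.factorial * Real.exp (1 + r + -r ^ 2) := by rw [mul_assoc, ← Real.exp_add]
    _ ≤ m.factorial * Real.exp 2 := by gcongr; nlinarith [sq_nonneg (r - 1)]

theorem exists_norm_iteratedFDeriv_exp_comp_le {E : Type*} [NormedAddCommGroup E] [NormedSpace ℝ E]
    {f : E → ℝ} (hf : f.HasTemperateGrowth) (n : ℕ) :
    ∃ (m : ℕ) (C : ℝ), 0 ≤ C ∧ ∀ x,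
      ‖iteratedFDeriv ℝ n (fun x ↦ Real.exp (f x)) x‖ ≤ C * (1 + ‖x‖) ^ m * Real.exp (f x) := by
  obtain ⟨m, C, hC, hbound⟩ := hf.norm_iteratedFDeriv_le_uniform n
  refine ⟨m * n, n.factorial * (C + 1) ^ n, by positivity, fun x ↦ ?_⟩
  -- `C + 1` rather than `C`, so that `D ≤ D ^ i` for all `i ≥ 1`.
  set D := (C + 1) * (1 + ‖x‖) ^ m with hD_def
  have hD : 1 ≤ D :=
    one_le_mul_of_one_le_of_one_le (by linarith) (one_le_pow₀ (by linarith [norm_nonneg x]))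
  have hexp : ∀ i ≤ n, ‖iteratedFDeriv ℝ i Real.exp (f x)‖ ≤ Real.exp (f x) := fun i _ ↦ by
    rw [norm_iteratedFDeriv_eq_norm_iteratedDeriv, iteratedDeriv_eq_iterate, Real.iter_deriv_exp,
      Real.norm_of_nonneg (Real.exp_pos _).le]
  have hinner : ∀ i, 1 ≤ i → i ≤ n → ‖iteratedFDeriv ℝ i f x‖ ≤ D ^ i := fun i hi hin ↦
    calc ‖iteratedFDeriv ℝ i f x‖ ≤ C * (1 + ‖x‖) ^ m := hbound i hin x
      _ ≤ D := by rw [hD_def]; gcongr; linarith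
      _ ≤ D ^ i := le_self_pow₀ hD (by omega)
  calc ‖iteratedFDeriv ℝ n (Real.exp ∘ f) x‖
      ≤ n.factorial * Real.exp (f x) * D ^ n :=
        norm_iteratedFDeriv_comp_le Real.contDiff_exp hf.1 (mod_cast le_top) x hexp hinner
    _ = n.factorial * (C + 1) ^ n * (1 + ‖x‖) ^ (m * n) * Real.exp (f x) := by
        rw [hD_def, mul_pow, ← pow_mul]; ring

variable {H : Type*} [NormedAddCommGroup H] [InnerProductSpace ℝ H]

theorem exists_norm_pow_mul_norm_iteratedFDeriv_exp_neg_norm_sq_le (k n : ℕ) :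
    ∃ C : ℝ, ∀ x : H, ‖x‖ ^ k * ‖iteratedFDeriv ℝ n (fun x ↦ Real.exp (-‖x‖ ^ 2)) x‖ ≤ C := by
  obtain ⟨m, C, hC, hbound⟩ :=
    exists_norm_iteratedFDeriv_exp_comp_le (Function.hasTemperateGrowth_norm_sq (H := H)).neg n
  refine ⟨C * ((k + m).factorial * Real.exp 2), fun x ↦ ?_⟩
  have hx := norm_nonneg x
  calc ‖x‖ ^ k * ‖iteratedFDeriv ℝ n (fun x ↦ Real.exp (-‖x‖ ^ 2)) x‖
      ≤ (1 + ‖x‖) ^ k * (C * (1 + ‖x‖) ^ m * Real.exp (-‖x‖ ^ 2)) := by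
        gcongr
        · linarith
        · exact hbound x
    _ = C * ((1 + ‖x‖) ^ (k + m) * Real.exp (-‖x‖ ^ 2)) := by ring
    _ ≤ C * ((k + m).factorial * Real.exp 2) := by
        gcongr C * ?_
        exact one_add_pow_mul_exp_neg_sq_le _ (by linarith)

variable (H) in
/-- The Gaussian `η ↦ e^{-|η|²}`, unnormalized, as a Schwartz function. -/
noncomputable def schwartzGaussian : 𝓢(H, ℝ) where
  toFun x := Real.exp (-‖x‖ ^ 2)
  smooth' := Real.contDiff_exp.comp (contDiff_norm_sq ℝ).neg
  decay' := exists_norm_pow_mul_norm_iteratedFDeriv_exp_neg_norm_sq_le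

variable (H) in
/-- The profile `g(η) = e^{-|η|²} η` of the symbol `h(ξ,t) = t⁻¹ g(√t ξ)`, as a Schwartz
function. -/
noncomputable def schwartzGaussianSMulId : 𝓢(H, H) :=
  SchwartzMap.bilinLeftCLM (ContinuousLinearMap.lsmul ℝ ℝ (E := H))
    Function.HasTemperateGrowth.id' (schwartzGaussian H)

theorem schwartzGaussianSMulId_apply (x : H) :
    schwartzGaussianSMulId H x = Real.exp (-‖x‖ ^ 2) • x :=
  rfl

theorem inv_smul_schwartzGaussianSMulId_sqrt_smul {t : ℝ} (ht : 0 ≤ t) (x : H) :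
    t⁻¹ • schwartzGaussianSMulId H (√t • x) = ((√t)⁻¹ * Real.exp (-‖x‖ ^ 2 * t)) • x := by
  have hexponent : -‖√t • x‖ ^ 2 = -‖x‖ ^ 2 * t := by
    rw [norm_smul, mul_pow, Real.norm_of_nonneg (Real.sqrt_nonneg t), Real.sq_sqrt ht]
    ring
  rw [schwartzGaussianSMulId_apply, hexponent, smul_smul, smul_smul, ← Real.sqrt_div_self]
  ring_nf

theorem mikhlin_symbol_estimate_general (k : ℕ) :
    ∃ C : ℝ, 0 < C ∧ ∀ ξ : H, ξ ≠ 0 →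
      ENNReal.ofReal (‖ξ‖ ^ k) *
        ∫⁻ t in Ioi (0 : ℝ),
          ‖iteratedFDeriv ℝ k (fun ζ : H ↦ ((√t)⁻¹ * Real.exp (-‖ζ‖ ^ 2 * t)) • ζ) ξ‖ₑ
        ≤ ENNReal.ofReal C := by
  obtain ⟨C, hC, hbound⟩ :=
    exists_lintegral_norm_iteratedFDeriv_dilation_le (schwartzGaussianSMulId H)
      (by rw [schwartzGaussianSMulId_apply, smul_zero]) k
  refine ⟨C, hC, fun ξ hξ ↦ (hbound ξ hξ).trans_eq' ?_⟩
  congr 1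
  refine setLIntegral_congr_fun measurableSet_Ioi fun t ht ↦ ?_
  simp only [inv_smul_schwartzGaussianSMulId_sqrt_smul (le_of_lt ht)]

end Gaussian

/-- Let `h(ξ,t) = (ξ/√t) e^{-|ξ|² t}` for `ξ ∈ ℝᴺ`, `t > 0`. For every
derivative order `k` there is `C_k > 0` such that
`|ξ|^k ∫₀^∞ ‖D^k_ξ h(ξ,t)‖ dt ≤ C_k` for all `ξ ≠ 0`. -/
theorem mikhlin_symbol_estimate (N : ℕ) (k : ℕ) :
    ∃ C : ℝ, 0 < C ∧ ∀ ξ : EuclideanSpace ℝ (Fin N), ξ ≠ 0 →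
      ENNReal.ofReal (‖ξ‖ ^ k) *
        ∫⁻ t in Set.Ioi (0:ℝ),
          (‖iteratedFDeriv ℝ k
            (fun ζ : EuclideanSpace ℝ (Fin N) =>
              ((Real.sqrt t)⁻¹ * Real.exp (-‖ζ‖ ^ 2 * t)) • ζ) ξ‖₊ : ℝ≥0∞)
        ≤ ENNReal.ofReal C := by
  exact mikhlin_symbol_estimate_general k
end

section
/- Let ν ≥ −1/2 and α, z ∈ ℂ with Re α > 0. Then ∫₀^∞ e^{−αρ²} ρ^{1+ν} I_ν(zρ) dρ = z^ν/(2α)^{ν+1} · e^{z²/(4α)}, where I_ν is the modified Bessel function of the first kind. -/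
open MeasureTheory Set
open scoped Real

/-- The modified Bessel function of the first kind `I_ν`, defined by its power series
(with principal branch of the power `(w/2)^ν`). -/
noncomputable def besselI (ν : ℝ) (w : ℂ) : ℂ :=
  (w / 2) ^ (ν : ℂ) *
    ∑' n : ℕ, (w / 2) ^ (2 * n) / ((n.factorial : ℂ) * Complex.Gamma ((ν : ℂ) + 1 + (n : ℂ)))

/-!
Expand `I_ν` in its power series and integrate term by term: the Gamma factor of the moment
`∫ x ^ (2ν + 1 + 2n) e ^ (-α x ^ 2) dx = Γ(ν + 1 + n) / (2 α ^ (ν + 1 + n))` cancels the one in the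
coefficient, leaving the exponential series at `z ^ 2 / (4α)`. The moments are known for real `α`;
as a function of `α` they form a moment generating function, hence are analytic on `Re α > 0`, and
the formula extends by the identity theorem.
-/

open Complex Filter ProbabilityTheory
open scoped Nat Topology

theorem mul_ofReal_cpow (z s : ℂ) {r : ℝ} (hr : 0 ≤ r) :
    (z * (r : ℂ)) ^ s = z ^ s * (r : ℂ) ^ s := by
  rcases eq_or_ne s 0 with rfl | hs
  · simp
  rcases hr.eq_or_lt with rfl | hr
  · simp [zero_cpow hs]
  rcases eq_or_ne z 0 with rfl | hz
  · simp [zero_cpow hs]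
  have hr' : (r : ℂ) ≠ 0 := ofReal_ne_zero.mpr hr.ne'
  rw [cpow_def_of_ne_zero (mul_ne_zero hz hr'), cpow_def_of_ne_zero hz, cpow_def_of_ne_zero hr',
    log_mul_ofReal r hr z hz, ofReal_log hr.le, ← Complex.exp_add]
  ring_nf

theorem div_ofReal_cpow (z s : ℂ) {r : ℝ} (hr : 0 ≤ r) :
    (z / (r : ℂ)) ^ s = z ^ s / (r : ℂ) ^ s := by
  rw [div_eq_mul_inv, ← ofReal_inv, mul_ofReal_cpow z s (inv_nonneg.mpr hr), ofReal_inv,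
    inv_cpow_ofReal_nonneg hr, div_eq_mul_inv]

theorem div_ofReal_cpow_mul_cpow_neg_add_one_div (z b s : ℂ) {r : ℝ} (hr : 0 < r) :
    (z / r) ^ s * (b ^ (-(s + 1)) / r) = z ^ s / (r * b) ^ (s + 1) := by
  have hr' : (r : ℂ) ≠ 0 := ofReal_ne_zero.mpr hr.ne'
  rw [div_ofReal_cpow z s hr.le, mul_comm (r : ℂ) b, mul_ofReal_cpow b _ hr.le, cpow_neg,
    cpow_add (x := (r : ℂ)) s 1 hr', cpow_one]
  ring

theorem eqOn_re_pos_of_forall_ofReal_eq {E : Type*} [NormedAddCommGroup E] [NormedSpace ℂ E]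
    [CompleteSpace E] {f g : ℂ → E} (hf : DifferentiableOn ℂ f {z | 0 < z.re})
    (hg : DifferentiableOn ℂ g {z | 0 < z.re}) (hfg : ∀ x : ℝ, 0 < x → f x = g x) :
    EqOn f g {z | 0 < z.re} := by
  have hopen : IsOpen {z : ℂ | 0 < z.re} := isOpen_lt continuous_const continuous_re
  refine (hf.analyticOnNhd hopen).eqOn_of_preconnected_of_frequently_eq (hg.analyticOnNhd hopen)
    (convex_halfSpace_re_gt (0 : ℝ)).isPreconnected (z₀ := ((1 : ℝ) : ℂ)) (by simp) ?_
  have hreal : Tendsto ((↑) : ℝ → ℂ) (𝓝[≠] 1) (𝓝[≠] ((1 : ℝ) : ℂ)) :=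
    continuous_ofReal.continuousAt.continuousWithinAt.tendsto_nhdsWithin
      fun x hx => ofReal_injective.ne hx
  refine hreal.frequently (Eventually.frequently ?_)
  filter_upwards [nhdsWithin_le_nhds (lt_mem_nhds one_pos)] with x hx using hfg x hx

/-- The measure `x ^ q dx` on `(0, ∞)`. With respect to it, `∫ x ^ q e ^ (-b x ^ p) dx` is the value
at `b` of the moment generating function of `-x ^ p`. -/
noncomputable def rpowMeasure (q : ℝ) : Measure ℝ :=
  (volume.restrict (Ioi 0)).withDensity fun x => ENNReal.ofReal (x ^ q)

section rpowMeasure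

variable {E : Type*} [NormedAddCommGroup E] [NormedSpace ℝ E] (q : ℝ) (f : ℝ → E)

theorem integral_rpowMeasure :
    ∫ x, f x ∂rpowMeasure q = ∫ x in Ioi (0 : ℝ), x ^ q • f x := by
  rw [rpowMeasure, integral_withDensity_eq_integral_toReal_smul (by fun_prop) (by simp)]
  refine setIntegral_congr_fun measurableSet_Ioi fun x hx => ?_
  simp only [ENNReal.toReal_ofReal (Real.rpow_nonneg (le_of_lt hx) q)]

theorem integrable_rpowMeasure_iff :
    Integrable f (rpowMeasure q) ↔ IntegrableOn (fun x => x ^ q • f x) (Ioi 0) := by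
  rw [rpowMeasure, integrable_withDensity_iff_integrable_smul' (by fun_prop) (by simp)]
  refine integrableOn_congr_fun (fun x hx => ?_) measurableSet_Ioi
  simp only [ENNReal.toReal_ofReal (Real.rpow_nonneg (le_of_lt hx) q)]

end rpowMeasure

section StretchedExponential

variable {p q : ℝ} {b : ℂ}

theorem differentiableOn_integral_rpow_smul_cexp_neg_mul_rpow (hp : 0 < p) (hq : -1 < q) :
    DifferentiableOn ℂ (fun b : ℂ => ∫ x in Ioi (0 : ℝ), x ^ q • cexp (-b * ↑(x ^ p)))
      {b | 0 < b.re} := by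
  have hmgf (b : ℂ) : ∫ x in Ioi (0 : ℝ), x ^ q • cexp (-b * ↑(x ^ p)) =
      complexMGF (fun x => -x ^ p) (rpowMeasure q) b := by
    simp [complexMGF, integral_rpowMeasure]
  have hexp : Ioi 0 ⊆ integrableExpSet (fun x => -x ^ p) (rpowMeasure q) := fun b hb => by
    rw [integrableExpSet, mem_ofPred_eq, integrable_rpowMeasure_iff]
    simpa using integrableOn_rpow_mul_exp_neg_mul_rpow hq hp hb
  simp only [hmgf]
  exact differentiableOn_complexMGF.mono fun b hb => interior_maximal hexp isOpen_Ioi hb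

theorem integral_rpow_smul_cexp_neg_mul_rpow (hp : 0 < p) (hq : -1 < q) (hb : 0 < b.re) :
    ∫ x in Ioi (0 : ℝ), x ^ q • cexp (-b * ↑(x ^ p)) =
      b ^ (-((q + 1) / p : ℝ) : ℂ) / p * Real.Gamma ((q + 1) / p) := by
  refine eqOn_re_pos_of_forall_ofReal_eq
    (g := fun b => b ^ (-((q + 1) / p : ℝ) : ℂ) / p * Real.Gamma ((q + 1) / p))
    (differentiableOn_integral_rpow_smul_cexp_neg_mul_rpow hp hq) ?_ (fun b hb => ?_) hb
  · intro b hb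
    have : b ∈ slitPlane := .inl hb
    fun_prop (disch := assumption)
  · have h := congrArg ((↑) : ℝ → ℂ) (integral_rpow_mul_exp_neg_mul_rpow hp hq hb)
    rw [← integral_complex_ofReal] at h
    simpa [ofReal_cpow hb.le, neg_div, div_eq_mul_inv, -neg_add_rev] using h

theorem norm_rpow_smul_cexp_neg_mul_rpow {x : ℝ} (hx : 0 ≤ x) :
    ‖x ^ q • cexp (-b * ↑(x ^ p))‖ = x ^ q * Real.exp (-b.re * x ^ p) := by
  rw [norm_smul, Real.norm_of_nonneg (Real.rpow_nonneg hx q), norm_exp, re_mul_ofReal, neg_re]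

theorem integral_norm_rpow_smul_cexp_neg_mul_rpow (hp : 0 < p) (hq : -1 < q) (hb : 0 < b.re) :
    ∫ x in Ioi (0 : ℝ), ‖x ^ q • cexp (-b * ↑(x ^ p))‖ =
      b.re ^ (-((q + 1) / p)) / p * Real.Gamma ((q + 1) / p) := by
  rw [setIntegral_congr_fun measurableSet_Ioi fun x hx =>
      norm_rpow_smul_cexp_neg_mul_rpow (le_of_lt hx),
    integral_rpow_mul_exp_neg_mul_rpow hp hq hb, neg_div, mul_one_div]

theorem integrableOn_rpow_smul_cexp_neg_mul_rpow (hp : 0 < p) (hq : -1 < q) (hb : 0 < b.re) :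
    IntegrableOn (fun x : ℝ => x ^ q • cexp (-b * ↑(x ^ p))) (Ioi 0) := by
  refine (integrableOn_rpow_mul_exp_neg_mul_rpow hq hp hb).mono'
    (Measurable.aestronglyMeasurable (by fun_prop)) ?_
  filter_upwards [ae_restrict_mem measurableSet_Ioi] with x hx
    using (norm_rpow_smul_cexp_neg_mul_rpow (le_of_lt hx)).le

theorem integral_rpow_smul_cexp_neg_mul_rpow_mul_tsum (hp : 0 < p) (hq : -1 < q) (hb : 0 < b.re)
    {c : ℕ → ℂ}
    (hc : Summable fun n : ℕ => ‖c n‖ * (Real.Gamma ((q + 1) / p + n) / b.re ^ n)) :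
    ∫ x in Ioi (0 : ℝ), x ^ q • (cexp (-b * ↑(x ^ p)) * ∑' n, c n * (↑(x ^ p) : ℂ) ^ n) =
      b ^ (-((q + 1) / p : ℝ) : ℂ) / p *
        ∑' n : ℕ, c n * (Real.Gamma ((q + 1) / p + n) / b ^ n) := by
  have hb0 : b ≠ 0 := by rintro rfl; simp at hb
  have hqn (n : ℕ) : -1 < q + p * n := hq.trans_le (le_add_of_nonneg_right (by positivity))
  have hexponent (n : ℕ) : (q + p * n + 1) / p = (q + 1) / p + n := by field_simp; ring
  set F : ℕ → ℝ → ℂ := fun n x => c n * (x ^ (q + p * n) • cexp (-b * ↑(x ^ p)))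
  have hterm (n : ℕ) : ∫ x in Ioi (0 : ℝ), F n x =
      b ^ (-((q + 1) / p : ℝ) : ℂ) / p * (c n * (Real.Gamma ((q + 1) / p + n) / b ^ n)) := by
    rw [integral_const_mul, integral_rpow_smul_cexp_neg_mul_rpow hp (hqn n) hb, hexponent,
      ofReal_add, neg_add, cpow_add _ _ hb0, ofReal_natCast, cpow_neg _ (n : ℂ), cpow_natCast]
    ring
  have hnorm (n : ℕ) : ∫ x in Ioi (0 : ℝ), ‖F n x‖ =
      b.re ^ (-((q + 1) / p)) / p * (‖c n‖ * (Real.Gamma ((q + 1) / p + n) / b.re ^ n)) := by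
    simp only [F, norm_mul (c n)]
    rw [integral_const_mul, integral_norm_rpow_smul_cexp_neg_mul_rpow hp (hqn n) hb, hexponent,
      neg_add, Real.rpow_add hb, Real.rpow_neg hb.le (n : ℝ), Real.rpow_natCast]
    ring
  have hF_int (n : ℕ) : IntegrableOn (F n) (Ioi 0) :=
    (integrableOn_rpow_smul_cexp_neg_mul_rpow hp (hqn n) hb).const_mul (c n)
  have hF_sum : Summable fun n => ∫ x in Ioi (0 : ℝ), ‖F n x‖ := by
    simpa only [hnorm] using hc.mul_left _
  calc ∫ x in Ioi (0 : ℝ), x ^ q • (cexp (-b * ↑(x ^ p)) * ∑' n, c n * (↑(x ^ p) : ℂ) ^ n)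
    _ = ∫ x in Ioi (0 : ℝ), ∑' n, F n x := by
      refine setIntegral_congr_fun measurableSet_Ioi fun x hx => ?_
      have hpow (n : ℕ) : x ^ (q + p * n) = x ^ q * (x ^ p) ^ n := by
        rw [Real.rpow_add hx, Real.rpow_mul_natCast (le_of_lt hx)]
      simp only [F, hpow, ← tsum_mul_left, real_smul, ofReal_mul, ofReal_pow]
      exact tsum_congr fun n => by ring
    _ = ∑' n, ∫ x in Ioi (0 : ℝ), F n x :=
      (integral_tsum_of_summable_integral_norm hF_int hF_sum).symm
    _ = _ := by simp only [hterm, tsum_mul_left]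

end StretchedExponential

/-- The `n`-th term of the power series of the entire function `(w / 2) ^ (-ν) * I_ν(w)`. At a pole
of `Γ` the value `0` of the quotient agrees with the zero of the entire function `1 / Γ`. -/
noncomputable def besselITerm (ν : ℝ) (w : ℂ) (n : ℕ) : ℂ :=
  (w / 2) ^ (2 * n) / (n ! * Complex.Gamma (ν + 1 + n))

theorem besselITerm_mul (ν : ℝ) (w x : ℂ) (n : ℕ) :
    besselITerm ν (w * x) n = besselITerm ν w n * (x ^ 2) ^ n := by
  rw [besselITerm, besselITerm, mul_div_right_comm, mul_pow, pow_mul x, mul_div_right_comm]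

theorem besselI_mul_ofReal (ν : ℝ) (w : ℂ) {x : ℝ} (hx : 0 ≤ x) :
    besselI ν (w * x) =
      (w / 2) ^ (ν : ℂ) * x ^ (ν : ℂ) * ∑' n, besselITerm ν w n * (x ^ 2) ^ n := by
  simp only [← besselITerm_mul]
  rw [← mul_ofReal_cpow _ _ hx, ← mul_div_right_comm]
  rfl

theorem besselITerm_mul_Gamma_div_pow {ν : ℝ} (hν : -1 < ν) (w b : ℂ) (n : ℕ) :
    besselITerm ν w n * (Real.Gamma (ν + 1 + n) / b ^ n) = (w ^ 2 / (4 * b)) ^ n / n ! := by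
  have hpos : 0 < ν + 1 + n := by linarith [n.cast_nonneg (α := ℝ)]
  have hΓ : (Real.Gamma (ν + 1 + n) : ℂ) ≠ 0 := ofReal_ne_zero.mpr (Real.Gamma_pos_of_pos hpos).ne'
  have hΓ_ofReal : Complex.Gamma (ν + 1 + n) = Real.Gamma (ν + 1 + n) := by
    rw [← Complex.Gamma_ofReal]
    push_cast
    rfl
  rw [besselITerm, hΓ_ofReal, ← mul_div_mul_right _ (n ! : ℂ) hΓ, div_mul_div_comm, pow_mul,
    show w ^ 2 / (4 * b) = (w / 2) ^ 2 / b by ring, div_pow _ b]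
  ring

theorem summable_norm_besselITerm_mul_Gamma_div_pow {ν : ℝ} (hν : -1 < ν) (w : ℂ) {a : ℝ}
    (ha : 0 ≤ a) :
    Summable fun n : ℕ => ‖besselITerm ν w n‖ * (Real.Gamma (ν + 1 + n) / a ^ n) := by
  refine (Real.summable_pow_div_factorial (‖w‖ ^ 2 / (4 * a))).congr fun n => ?_
  have hΓ : 0 ≤ Real.Gamma (ν + 1 + n) :=
    Real.Gamma_nonneg_of_nonneg (by linarith [n.cast_nonneg (α := ℝ)])
  simpa [abs_of_nonneg ha, abs_of_nonneg hΓ] using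
    congrArg norm (besselITerm_mul_Gamma_div_pow hν w a n).symm

theorem cexp_neg_mul_sq_mul_cpow_mul_besselI (ν : ℝ) (α z : ℂ) {x : ℝ} (hx : 0 < x) :
    cexp (-α * (x : ℂ) ^ 2) * (x : ℂ) ^ ((1 + ν : ℝ) : ℂ) * besselI ν (z * x) =
      (z / 2) ^ (ν : ℂ) * (x ^ (2 * ν + 1) •
        (cexp (-α * ↑(x ^ 2)) * ∑' n, besselITerm ν z n * (↑(x ^ 2) : ℂ) ^ n)) := by
  have hpow : x ^ (2 * ν + 1) = x ^ (1 + ν) * x ^ ν := by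
    rw [← Real.rpow_add hx]
    ring_nf
  rw [besselI_mul_ofReal ν z hx.le, hpow, real_smul, ofReal_mul, ofReal_cpow hx.le,
    ofReal_cpow hx.le, ofReal_pow]
  ring

theorem integral_gaussian_besselI_general (ν : ℝ) (hν : -1 < ν) (α z : ℂ) (hα : 0 < α.re) :
    ∫ ρ in Set.Ioi (0:ℝ),
        Complex.exp (-α * (ρ : ℂ) ^ 2) * ((ρ : ℂ) ^ ((1 + ν : ℝ) : ℂ)) * besselI ν (z * ρ) =
      z ^ (ν : ℂ) / (2 * α) ^ ((ν : ℂ) + 1) * Complex.exp (z ^ 2 / (4 * α)) := by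
  have hexponent : (2 * ν + 1 + 1) / 2 = ν + 1 := by ring
  have hseries := integral_rpow_smul_cexp_neg_mul_rpow_mul_tsum (q := 2 * ν + 1) (b := α)
    (c := besselITerm ν z) two_pos (by linarith) hα
    (by simpa only [hexponent] using summable_norm_besselITerm_mul_Gamma_div_pow hν z hα.le)
  simp only [Real.rpow_two, hexponent, besselITerm_mul_Gamma_div_pow hν] at hseries
  have hconst : (z / 2) ^ (ν : ℂ) * (α ^ (-(ν + 1 : ℝ) : ℂ) / (2 : ℝ)) =
      z ^ (ν : ℂ) / (2 * α) ^ ((ν : ℂ) + 1) := by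
    simpa using div_ofReal_cpow_mul_cpow_neg_add_one_div z α ν two_pos
  rw [setIntegral_congr_fun measurableSet_Ioi fun ρ hρ =>
      cexp_neg_mul_sq_mul_cpow_mul_besselI ν α z hρ,
    integral_const_mul, hseries, ← mul_assoc, hconst, Complex.exp_eq_exp_ℂ,
    NormedSpace.exp_eq_tsum_div]

/-- For `ν ≥ -1/2` and `α, z ∈ ℂ` with `Re α > 0`:
`∫₀^∞ e^{-αρ²} ρ^{1+ν} I_ν(zρ) dρ = z^ν / (2α)^{ν+1} · e^{z²/(4α)}`. -/
theorem integral_gaussian_besselI (ν : ℝ) (hν : -(1 / 2 : ℝ) ≤ ν) (α z : ℂ)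
    (hα : 0 < α.re) :
    ∫ ρ in Set.Ioi (0:ℝ),
        Complex.exp (-α * (ρ : ℂ) ^ 2) * ((ρ : ℂ) ^ ((1 + ν : ℝ) : ℂ)) * besselI ν (z * ρ) =
      z ^ (ν : ℂ) / (2 * α) ^ ((ν : ℂ) + 1) * Complex.exp (z ^ 2 / (4 * α)) :=
  integral_gaussian_besselI_general ν (by linarith) α z hα
end
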